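/- A vector v ∈ ⊗^n V (V = ℂ^d) that is a weight vector of weight λ and invariant under the unipotent upper triangular group U, where λ is a partition with more than d nonzero parts, must be zero; equivalently, Sym^a(Sym^b V) contains no irreducible GL(V)-constituent of highest weight λ when λ has more than min(a·b, dim V) rows, and in fact no constituent of Sym^a(Sym^b V) has more than a rows. -/

import Mathlib

/-!
Let `F` be the tensor in `⊗^a ⊗^b ℂ^d` underlying `f`. For an `a × d` matrix `L`, whose rows are
read as linear forms `ℓ_1, …, ℓ_a` on `ℂ^d`, put `P(L) = (ℓ_1^{⊗b} ⊗ ⋯ ⊗ ℓ_a^{⊗b})(F)`.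

* `P` determines `f`: the forms `ℓ^{⊗b}` separate the points of `Sym^b` (`SymT_eq_zero`, comparing
  coefficients of a polynomial in `ℓ`), hence span its dual, and the pure tensors formed from a
  spanning set of the dual detect every element of the tensor power (`tensor_eq_zero`).
* The hypotheses say `P(L g) = P(L)` for `g` upper unitriangular and
  `P(L diag(α)) = ∏ α_i^{lam i} P(L)`.
* If the first `a` columns of `L` are linearly independent, some upper unitriangular `g` clears all
  the later columns (`exists_unitri_clear`). The matrix `L g` is then unchanged by
  `diag(1, …, 1, 0, …, 0)` with `a` ones, whereas `lam` has a nonzero entry in a position after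
  the first `a`, because it has more than `a` nonzero entries. So `P(L) = P(L g) = 0`.
* Such `L` are dense and `P` is continuous, so `P = 0`.
-/

noncomputable section
open PiTensorProduct TensorProduct

namespace Foulkes

variable (V : Type) [AddCommGroup V] [Module ℂ V]
variable (W : Type) [AddCommGroup W] [Module ℂ W]

/-- The action of a permutation on the tensor power, permuting the tensor factors. -/
def permAct (n : ℕ) (π : Equiv.Perm (Fin n)) : (⨂[ℂ]^n V) ≃ₗ[ℂ] ⨂[ℂ]^n V :=
  PiTensorProduct.reindex ℂ (fun _ => V) π

/-- The subspace of symmetric tensors in the `n`-th tensor power. -/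
def SymT (n : ℕ) : Submodule ℂ (⨂[ℂ]^n V) :=
  ⨅ π : Equiv.Perm (Fin n), LinearMap.ker ((permAct V n π).toLinearMap - LinearMap.id)

lemma mem_SymT {n : ℕ} {x : ⨂[ℂ]^n V} :
    x ∈ SymT V n ↔ ∀ π : Equiv.Perm (Fin n), permAct V n π x = x := by
  simp [SymT, Submodule.mem_iInf, LinearMap.mem_ker, LinearMap.sub_apply, sub_eq_zero]

/-- The symmetrization operator on the `n`-th tensor power. -/
def symmetrize (n : ℕ) : (⨂[ℂ]^n V) →ₗ[ℂ] ⨂[ℂ]^n V :=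
  ((n.factorial : ℂ))⁻¹ • ∑ π : Equiv.Perm (Fin n), (permAct V n π).toLinearMap

lemma permAct_symmetrize (n : ℕ) (π : Equiv.Perm (Fin n)) (x : ⨂[ℂ]^n V) :
    permAct V n π (symmetrize V n x) = symmetrize V n x := by
  unfold symmetrize
  rw [LinearMap.smul_apply, map_smul, LinearMap.sum_apply, map_sum]
  congr 1
  refine Fintype.sum_equiv (Equiv.mulLeft π)
    (fun σ => permAct V n π ((permAct V n σ).toLinearMap x))
    (fun σ => (permAct V n σ).toLinearMap x) (fun σ => ?_)
  simp only [LinearEquiv.coe_coe, Equiv.coe_mulLeft]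
  unfold permAct
  exact PiTensorProduct.reindex_reindex (σ : Fin n ≃ Fin n) (π : Fin n ≃ Fin n) x

lemma symmetrize_mem (n : ℕ) (x : ⨂[ℂ]^n V) : symmetrize V n x ∈ SymT V n :=
  (mem_SymT V).2 fun π => permAct_symmetrize V n π x

/-- The canonical projection onto symmetric tensors. -/
def projSym (n : ℕ) : (⨂[ℂ]^n V) →ₗ[ℂ] SymT V n :=
  (symmetrize V n).codRestrict _ (symmetrize_mem V n)

variable {V W} in
lemma map_mem_SymT {n : ℕ} (f : V →ₗ[ℂ] W) {x : ⨂[ℂ]^n V} (hx : x ∈ SymT V n) :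
    (PiTensorProduct.map fun _ => f) x ∈ SymT W n := by
  rw [mem_SymT] at hx ⊢
  intro π
  unfold permAct at hx ⊢
  have h := PiTensorProduct.map_reindex (fun _ : Fin n => f) (π : Fin n ≃ Fin n) x
  rw [← h, hx π]

variable {V W} in
/-- The map on symmetric tensors induced functorially by a linear map. -/
def symMap (n : ℕ) (f : V →ₗ[ℂ] W) : SymT V n →ₗ[ℂ] SymT W n :=
  LinearMap.codRestrict _ ((PiTensorProduct.map fun _ => f) ∘ₗ (SymT V n).subtype)
    (fun x => map_mem_SymT f x.2)

lemma tprod_const_mem (n : ℕ) (v : V) : (tprod ℂ fun _ : Fin n => v) ∈ SymT V n := by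
  simp [mem_SymT, permAct, PiTensorProduct.reindex_tprod]

/-- `ℂ^d` with its standard basis. -/
abbrev Vd (d : ℕ) : Type := Fin d → ℂ

/-- The standard basis vector `e_i` of `ℂ^d`. -/
def stdb (d : ℕ) (i : Fin d) : Vd d := Pi.single i 1

/-- The diagonal action of a `d × d` matrix on the `n`-th tensor power of `ℂ^d`. -/
def matAct (d n : ℕ) (g : Matrix (Fin d) (Fin d) ℂ) :
    (⨂[ℂ]^n (Vd d)) →ₗ[ℂ] ⨂[ℂ]^n (Vd d) :=
  PiTensorProduct.map fun _ => Matrix.toLin' g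

/-- An upper unitriangular matrix: `1`s on the diagonal, `0`s below it. -/
def IsUpperUnitri (d : ℕ) (g : Matrix (Fin d) (Fin d) ℂ) : Prop :=
  (∀ i, g i i = 1) ∧ ∀ i j : Fin d, (j : ℕ) < (i : ℕ) → g i j = 0

/-- The tensor `ζ_λ`, the tensor product over the columns of `λ` (of lengths
`μ 0, …, μ (m-1)`, the conjugate partition) of the wedge products
`e_1 ∧ ⋯ ∧ e_{μ c}`, written out as the signed sum over column permutations.
`E` assigns to each box (column `c`, row `r`) its tensor position. -/
def zeta (d n m : ℕ) (μ : Fin m → ℕ) (hle : ∀ c, μ c ≤ d)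
    (E : (Σ c : Fin m, Fin (μ c)) ≃ Fin n) : ⨂[ℂ]^n (Vd d) :=
  ∑ σ : ∀ c : Fin m, Equiv.Perm (Fin (μ c)),
    (∏ c, ((Equiv.Perm.sign (σ c) : ℤ) : ℂ)) •
      tprod ℂ fun p : Fin n =>
        stdb d (Fin.castLE (hle (E.symm p).1) (σ (E.symm p).1 (E.symm p).2))

/-- The conjugate partition: `conj m μ i` is the number of columns of length `> i`. -/
def conj (m : ℕ) (μ : Fin m → ℕ) (i : ℕ) : ℕ :=
  (Finset.univ.filter fun c : Fin m => i < μ c).card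

/-- A highest weight vector of weight `lam` in `⊗^n ℂ^d`: invariant under all upper
unitriangular matrices, and scaled by `∏ αᵢ^{lam i}` under `diag(α)`. -/
def IsHWV (d n : ℕ) (lam : Fin d → ℕ) (x : ⨂[ℂ]^n (Vd d)) : Prop :=
  (∀ g, IsUpperUnitri d g → matAct d n g x = x) ∧
    ∀ α : Fin d → ℂ, matAct d n (Matrix.diagonal α) x = (∏ i, α i ^ lam i) • x

/-! ### Evaluating tensors on products of linear forms -/

section Evaluation

variable {V W}

/-- The linear form `φ_1 ⊗ ⋯ ⊗ φ_n` on the `n`-th tensor power. -/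
def evT {n : ℕ} (φ : Fin n → Module.Dual ℂ V) : (⨂[ℂ]^n V) →ₗ[ℂ] ℂ :=
  PiTensorProduct.dualDistrib (tprod ℂ φ)

lemma evT_tprod {n : ℕ} (φ : Fin n → Module.Dual ℂ V) (v : Fin n → V) :
    evT φ (tprod ℂ v) = ∏ i, φ i (v i) :=
  PiTensorProduct.dualDistrib_apply φ v

lemma evT_map {n : ℕ} (φ : Fin n → Module.Dual ℂ W) (g : V →ₗ[ℂ] W) (x : ⨂[ℂ]^n V) :
    evT φ (PiTensorProduct.map (fun _ => g) x) = evT (fun i => φ i ∘ₗ g) x := by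
  rw [← LinearMap.comp_apply]
  congr 1
  ext v
  simp [evT_tprod, PiTensorProduct.map_tprod]

lemma repr_eq_evT {n : ℕ} {κ : Type} (B : Module.Basis κ ℂ V) (x : ⨂[ℂ]^n V) (p : Fin n → κ) :
    (Basis.piTensorProduct fun _ : Fin n => B).repr x p = evT (fun i => B.coord (p i)) x := by
  have h : (Basis.piTensorProduct fun _ : Fin n => B).coord p
      = evT (fun i => B.coord (p i)) := by
    ext v
    simp [evT_tprod]
  exact LinearMap.congr_fun h x

lemma evT_permAct {n : ℕ} (φ : Fin n → Module.Dual ℂ V) (π : Equiv.Perm (Fin n))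
    (x : ⨂[ℂ]^n V) : evT φ (permAct V n π x) = evT (fun i => φ (π i)) x := by
  have h : evT φ ∘ₗ (permAct V n π).toLinearMap = evT (fun i => φ (π i)) := by
    ext v
    simp only [LinearMap.compMultilinearMap_apply, LinearMap.comp_apply, LinearEquiv.coe_coe,
      permAct, PiTensorProduct.reindex_tprod, evT_tprod]
    exact (Fintype.prod_equiv π _ _ (fun i => by simp)).symm
  exact LinearMap.congr_fun h x

/-- If a set of linear forms separates the points of `W`, then the products of forms taken from it
separate the points of the tensor power of `W`. -/
lemma tensor_eq_zero [FiniteDimensional ℂ W] {n : ℕ} (S : Set (Module.Dual ℂ W))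
    (hS : ∀ w : W, (∀ φ ∈ S, φ w = 0) → w = 0) (x : ⨂[ℂ]^n W)
    (hx : ∀ φ : Fin n → Module.Dual ℂ W, (∀ i, φ i ∈ S) → evT φ x = 0) : x = 0 := by
  have hspan : ⊤ ≤ Submodule.span ℂ S := by
    have h0 : (Submodule.span ℂ S).dualCoannihilator = ⊥ := by
      rw [eq_bot_iff]
      intro w hw
      rw [Submodule.mem_dualCoannihilator] at hw
      exact hS w fun φ hφ => hw φ (Submodule.subset_span hφ)
    rw [← Subspace.dualCoannihilator_dualAnnihilator_eq (W := Submodule.span ℂ S), h0,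
      Submodule.dualAnnihilator_bot]
  let M : MultilinearMap ℂ (fun _ : Fin n => Module.Dual ℂ W) ℂ :=
    ((LinearMap.applyₗ x).comp PiTensorProduct.dualDistrib).compMultilinearMap (tprod ℂ)
  have hM : M = 0 := by
    refine Module.Basis.ext_multilinear (fun _ => Module.Basis.ofSpan hspan) fun v => ?_
    exact hx _ fun i => Module.Basis.ofSpan_subset hspan ⟨_, rfl⟩
  refine (Basis.piTensorProduct fun _ : Fin n =>
    Module.Basis.ofVectorSpace ℂ W).ext_elem fun p => ?_
  rw [repr_eq_evT, map_zero, Finsupp.zero_apply]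
  exact DFunLike.congr_fun hM fun i => (Module.Basis.ofVectorSpace ℂ W).coord (p i)

end Evaluation

/-! ### Powers of linear forms separate symmetric tensors -/

/-- The linear form on `ℂ^d` with coordinate vector `t`. -/
def form {d : ℕ} (t : Fin d → ℂ) : Module.Dual ℂ (Vd d) :=
  ∑ k, t k • LinearMap.proj k

lemma form_apply {d : ℕ} (t : Fin d → ℂ) (v : Vd d) : form t v = ∑ k, t k * v k := by
  simp [form]

/-- Two words with the same letter multiplicities differ by a permutation of positions. -/
lemma exists_perm_of_content {n d : ℕ} (p q : Fin n → Fin d)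
    (h : ∑ i, Finsupp.single (p i) 1 = ∑ i, Finsupp.single (q i) (1 : ℕ)) :
    ∃ π : Equiv.Perm (Fin n), ∀ i, q (π i) = p i := by
  have hc : ∀ c, Nonempty ({i // p i = c} ≃ {i // q i = c}) := fun c => by
    have h1 := DFunLike.congr_fun h c
    simp only [Finsupp.finsetSum_apply, Finsupp.single_apply, Finset.sum_boole] at h1
    refine ⟨Fintype.equivOfCardEq ?_⟩
    simpa [Fintype.card_subtype] using h1
  exact ⟨Equiv.ofFiberEquiv fun c => (hc c).some, fun i => Equiv.ofFiberEquiv_map _ i⟩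

/-- As a function of `t`, the value at `x` of the `n`-th tensor power of `form t` is a polynomial;
its coefficient at a monomial is the sum of the coordinates of `x` over all words of that content,
and these coordinates agree when `x` is symmetric. -/
lemma SymT_eq_zero {d n : ℕ} (x : ⨂[ℂ]^n (Vd d)) (hx : x ∈ SymT (Vd d) n)
    (h : ∀ t : Fin d → ℂ, evT (fun _ : Fin n => form t) x = 0) : x = 0 := by
  classical
  set B := Basis.piTensorProduct fun _ : Fin n => Pi.basisFun ℂ (Fin d) with hB
  let c : (Fin n → Fin d) → ℂ := fun p => B.repr x p
  let m : (Fin n → Fin d) → (Fin d →₀ ℕ) := fun p => ∑ i, Finsupp.single (p i) 1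
  have hperm : ∀ p q, m p = m q → c p = c q := by
    intro p q hpq
    obtain ⟨π, hπ⟩ := exists_perm_of_content p q hpq
    have h2 : c q = evT (fun i => (Pi.basisFun ℂ (Fin d)).coord (q i)) (permAct (Vd d) n π x) := by
      rw [(mem_SymT (Vd d)).1 hx π]
      exact repr_eq_evT _ x q
    rw [h2, evT_permAct]
    simp only [hπ]
    exact repr_eq_evT _ x p
  have hQ : ∑ p, MvPolynomial.monomial (m p) (c p) = 0 := by
    refine MvPolynomial.funext fun t => ?_
    rw [map_zero, ← h t]
    conv_rhs => rw [← B.sum_repr x]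
    simp only [map_sum, map_smul, smul_eq_mul]
    refine Finset.sum_congr rfl fun p _ => ?_
    rw [hB, Basis.piTensorProduct_apply, evT_tprod]
    rw [MvPolynomial.eval_monomial, ← Finsupp.prod_finsetSum_index (by simp) (by simp [pow_add])]
    simp [c, hB, form_apply, Pi.single_apply]
  refine B.ext_elem fun q => ?_
  have h3 := congrArg (MvPolynomial.coeff (m q)) hQ
  rw [MvPolynomial.coeff_sum] at h3
  simp only [MvPolynomial.coeff_monomial, MvPolynomial.coeff_zero] at h3
  rw [← Finset.sum_filter, Finset.sum_congr rfl (g := fun _ => c q)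
    (fun p hp => hperm p q (Finset.mem_filter.1 hp).2), Finset.sum_const, smul_eq_zero] at h3
  rw [map_zero, Finsupp.zero_apply]
  refine h3.resolve_left ?_
  exact (Finset.card_pos.2 ⟨q, by simp⟩).ne'

/-! ### The polynomial function of a tensor on matrices -/

/-- The value at `F` of `ℓ_1^{⊗b} ⊗ ⋯ ⊗ ℓ_a^{⊗b}`, with `ℓ_i` the `i`-th row of `L`. -/
def matEval {a b d : ℕ} (F : ⨂[ℂ]^a (⨂[ℂ]^b (Vd d))) (L : Matrix (Fin a) (Fin d) ℂ) : ℂ :=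
  evT (fun i => evT fun _ : Fin b => form (L i)) F

lemma form_comp_toLin' {a d : ℕ} (L : Matrix (Fin a) (Fin d) ℂ) (g : Matrix (Fin d) (Fin d) ℂ)
    (i : Fin a) : form (L i) ∘ₗ Matrix.toLin' g = form ((L * g) i) := by
  refine LinearMap.ext fun v => ?_
  have := congrFun (Matrix.mulVec_mulVec v L g) i
  simpa [form_apply, Matrix.mulVec, dotProduct] using this

lemma matEval_mul {a b d : ℕ} (F : ⨂[ℂ]^a (⨂[ℂ]^b (Vd d))) (L : Matrix (Fin a) (Fin d) ℂ)
    (g : Matrix (Fin d) (Fin d) ℂ) :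
    matEval F (L * g) = matEval ((PiTensorProduct.map fun _ : Fin a => matAct d b g) F) L := by
  unfold matEval
  rw [evT_map]
  congr 2
  funext i
  refine LinearMap.ext fun x => ?_
  rw [LinearMap.comp_apply, matAct, evT_map, form_comp_toLin']

lemma continuous_evT_form {a b d : ℕ} (i : Fin a) (x : ⨂[ℂ]^b (Vd d)) :
    Continuous fun L : Matrix (Fin a) (Fin d) ℂ => evT (fun _ : Fin b => form (L i)) x := by
  induction x using PiTensorProduct.induction_on with
  | smul_tprod r v =>
    simp only [map_smul, evT_tprod, form_apply]
    fun_prop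
  | add x y hx hy =>
    simp only [map_add]
    exact hx.add hy

lemma continuous_matEval {a b d : ℕ} (F : ⨂[ℂ]^a (⨂[ℂ]^b (Vd d))) :
    Continuous (matEval F) := by
  unfold matEval
  induction F using PiTensorProduct.induction_on with
  | smul_tprod r v =>
    simp only [map_smul, evT_tprod]
    have := fun i => continuous_evT_form (a := a) i (v i)
    fun_prop
  | add x y hx hy =>
    simp only [map_add]
    exact hx.add hy

/-! ### Clearing columns, and density -/

/-- When the leading `a × a` block of `L` is invertible, upper unitriangular column operations
clear the remaining columns. -/
lemma exists_unitri_clear {a e : ℕ} (L : Matrix (Fin a) (Fin (a + e)) ℂ)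
    (hL : IsUnit (L.submatrix id (Fin.castAdd e)).det) :
    ∃ g, IsUpperUnitri (a + e) g ∧ ∀ i j, (L * g) i (Fin.natAdd a j) = 0 := by
  set A := L.submatrix id (Fin.castAdd e) with hA
  set C := L.submatrix id (Fin.natAdd a) with hC
  -- The block matrix `[[1, -A⁻¹ C], [0, 1]]`.
  let g : Matrix (Fin (a + e)) (Fin (a + e)) ℂ :=
    (Matrix.fromBlocks 1 (-(A⁻¹ * C)) 0 1).submatrix finSumFinEquiv.symm finSumFinEquiv.symm
  refine ⟨g, ⟨fun i => ?_, fun i j hij => ?_⟩, fun i j => ?_⟩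
  · induction i using Fin.addCases <;> simp [g]
  · induction i using Fin.addCases with
    | left i =>
      induction j using Fin.addCases with
      | left j =>
        have : i ≠ j := by rintro rfl; simp at hij
        simp [g, this]
      | right j => simp at hij; omega
    | right i =>
      induction j using Fin.addCases with
      | left j => simp [g]
      | right j =>
        have : i ≠ j := by rintro rfl; simp at hij
        simp [g, this]
  · have h1 : (A * (A⁻¹ * C)) i j = C i j := by
      rw [← Matrix.mul_assoc, Matrix.mul_nonsing_inv _ hL, Matrix.one_mul]
    have h2 : ∑ k, L i (Fin.castAdd e k) * (A⁻¹ * C) k j = L i (Fin.natAdd a j) := h1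
    simp [Matrix.mul_apply, Fin.sum_univ_add, g, Matrix.one_apply] at h2 ⊢
    rw [h2]
    simp

/-- The matrices with invertible leading block are dense: along `t ↦ L + t [1 | 0]`, the
determinant of the leading block vanishes only when `-t` is an eigenvalue of that of `L`. -/
lemma eq_zero_of_generic {a e : ℕ} (P : Matrix (Fin a) (Fin (a + e)) ℂ → ℂ) (hP : Continuous P)
    (h : ∀ L, IsUnit (L.submatrix id (Fin.castAdd e)).det → P L = 0)
    (L : Matrix (Fin a) (Fin (a + e)) ℂ) : P L = 0 := by
  let E : Matrix (Fin a) (Fin (a + e)) ℂ :=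
    Matrix.of fun i j => if (j : ℕ) = i then 1 else 0
  let A := L.submatrix id (Fin.castAdd e)
  have hfin : {t : ℂ | (-A).charpoly.IsRoot t}.Finite :=
    Polynomial.finite_setOfPred_isRoot (Matrix.charpoly_monic _).ne_zero
  have hd : Dense {t : ℂ | (-A).charpoly.IsRoot t}ᶜ := hfin.countable.dense_compl ℂ
  have hc : Continuous fun t : ℂ => P (L + t • E) := by fun_prop
  have h0 : (fun t : ℂ => P (L + t • E)) = fun _ => 0 := by
    refine Continuous.ext_on hd hc continuous_const fun t ht => h _ ?_
    rw [isUnit_iff_ne_zero]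
    intro hdet
    apply ht
    rw [Set.mem_ofPred_eq, Polynomial.IsRoot, Matrix.eval_charpoly, ← hdet]
    congr 1
    ext i j
    simp only [E, A, Matrix.scalar_apply, Matrix.diagonal_apply, Fin.ext_iff, Matrix.sub_apply,
      Matrix.neg_apply, Matrix.submatrix_apply, Matrix.add_apply, Matrix.smul_apply, Matrix.of_apply, id,
      Fin.val_castAdd, smul_eq_mul, mul_ite, mul_one, mul_zero, eq_comm (a := (j : ℕ))]
    ring
  simpa using congrFun h0 0

lemma exists_large_index {a e : ℕ} (lam : Fin (a + e) → ℕ)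
    (h : a < (Finset.univ.filter fun i => lam i ≠ 0).card) :
    ∃ j : Fin e, lam (Fin.natAdd a j) ≠ 0 := by
  by_contra! hc
  have hsub : (Finset.univ.filter fun i => lam i ≠ 0) ⊆ Finset.univ.image (Fin.castAdd e) := by
    intro i hi
    induction i using Fin.addCases with
    | left i => simp
    | right j => simp [hc j] at hi
  have := (Finset.card_le_card hsub).trans Finset.card_image_le
  rw [Finset.card_univ, Fintype.card_fin] at this
  omega


/-- Every irreducible constituent of `Sym^a Sym^b V` has at most `a` rows: a `U`-invariant
weight vector in `Sym^a Sym^b V` whose weight `lam` has more than `a` nonzero parts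
must be zero. -/
theorem no_constituent_with_more_than_a_rows (d a b : ℕ) (lam : Fin d → ℕ)
    (hrows : a < (Finset.univ.filter fun i : Fin d => lam i ≠ 0).card)
    (f : SymT (SymT (Vd d) b) a)
    (hU : ∀ g, IsUpperUnitri d g →
      (PiTensorProduct.map fun _ : Fin a => matAct d b g)
          ((PiTensorProduct.map fun _ : Fin a => (SymT (Vd d) b).subtype)
            ((SymT (SymT (Vd d) b) a).subtype f))
        = (PiTensorProduct.map fun _ : Fin a => (SymT (Vd d) b).subtype)
            ((SymT (SymT (Vd d) b) a).subtype f))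
    (hD : ∀ α : Fin d → ℂ,
      (PiTensorProduct.map fun _ : Fin a => matAct d b (Matrix.diagonal α))
          ((PiTensorProduct.map fun _ : Fin a => (SymT (Vd d) b).subtype)
            ((SymT (SymT (Vd d) b) a).subtype f))
        = (∏ i, α i ^ lam i) •
            (PiTensorProduct.map fun _ : Fin a => (SymT (Vd d) b).subtype)
              ((SymT (SymT (Vd d) b) a).subtype f)) :
    f = 0 := by
  have had : a ≤ d := hrows.le.trans ((Finset.card_le_univ _).trans (by simp))
  obtain ⟨e, rfl⟩ := Nat.exists_eq_add_of_le had
  obtain ⟨j₀, hj₀⟩ := exists_large_index lam hrows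
  set F := (PiTensorProduct.map fun _ : Fin a => (SymT (Vd (a + e)) b).subtype)
    ((SymT (SymT (Vd (a + e)) b) a).subtype f) with hF
  -- The diagonal matrix with `a` ones followed by zeros.
  let α : Fin (a + e) → ℂ := fun i => if (i : ℕ) < a then 1 else 0
  have hα : ∏ i, α i ^ lam i = 0 :=
    Finset.prod_eq_zero (Finset.mem_univ (Fin.natAdd a j₀)) (by simp [α, hj₀])
  have hP : ∀ L, matEval F L = 0 := by
    refine eq_zero_of_generic _ (continuous_matEval F) fun L hL => ?_
    obtain ⟨g, hg, hclear⟩ := exists_unitri_clear L hL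
    have h1 : L * g * Matrix.diagonal α = L * g := by
      ext i j
      rw [Matrix.mul_diagonal]
      induction j using Fin.addCases with
      | left j => simp [α]
      | right j => simp [hclear]
    rw [← hU g hg, ← matEval_mul, ← h1, matEval_mul, hD, hα, zero_smul]
    simp [matEval]
  refine Subtype.ext (tensor_eq_zero
    (Set.range fun t : Fin (a + e) → ℂ =>
      (evT fun _ : Fin b => form t) ∘ₗ (SymT (Vd (a + e)) b).subtype) ?_ _ ?_)
  · intro w hw
    exact Subtype.ext (SymT_eq_zero _ w.2 fun t => hw _ ⟨t, rfl⟩)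
  · intro φ hφ
    choose L hL using hφ
    obtain rfl : _ = φ := funext hL
    exact (evT_map (fun i => evT fun _ : Fin b => form (L i)) _ _).symm.trans (hP L)

end Foulkes
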